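/- arXiv:2409.03492 — 2 statements merged into one kernel-verified Lean document; each statement's English description precedes it below -/
import Mathlib

section
/- Let ξ ∈ ℝ, μₙ ∈ ℝ and κₙ, αₙ, βₙ > 0. Then ∫ log N(ξ | μ, λ^{−1}) dNG(μₙ, κₙ, αₙ, βₙ)(μ, λ) = log N(ξ | μₙ, βₙ/αₙ) − (1/2)(1/κₙ + log αₙ − ψ(αₙ)), where ψ is the digamma function. -/
open MeasureTheory ProbabilityTheory Real
open scoped ENNReal NNReal

/-- The digamma function: derivative of `log ∘ Γ`. -/
noncomputable def digamma (x : ℝ) : ℝ := deriv (fun y => Real.log (Real.Gamma y)) x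

/-- Joint density of the normal-gamma distribution `NG(m, κ, α, β)` at `p = (μ, λ)`:
`N(μ | m, (κλ)⁻¹) · Gamma(λ | α, β)`. -/
noncomputable def normalGammaPDFReal (m κ α β : ℝ) (p : ℝ × ℝ) : ℝ :=
  gaussianPDFReal m (Real.toNNReal (κ * p.2)⁻¹) p.1 * gammaPDFReal α β p.2

/-- The normal-gamma distribution `NG(m, κ, α, β)` as a measure on `ℝ × ℝ`
(supported on `ℝ × (0, ∞)`). -/
noncomputable def normalGamma (m κ α β : ℝ) : Measure (ℝ × ℝ) :=
  MeasureTheory.volume.withDensity (fun p => ENNReal.ofReal (normalGammaPDFReal m κ α β p))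

open Filter Set Asymptotics Topology in
lemma ng_log_aux {a r : ℝ} (ha : 0 < a) (hr : 0 < r) :
    IntegrableOn (fun t : ℝ => t ^ (a - 1) * rexp (-(r * t)) * Real.log t) (Ioi 0) ∧
    ∫ t in Ioi (0:ℝ), t ^ (a - 1) * rexp (-(r * t)) * Real.log t
      = (1 / r) ^ a * Gamma a * (digamma a - Real.log r) := by
  have hc : Continuous (fun t : ℝ => ((rexp (-(r * t)) : ℝ) : ℂ)) := by fun_prop
  have key := mellin_hasDerivAt_of_isBigO_rpow (E := ℂ) (a := a + 1) (b := 0) (s := (a : ℂ))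
    (f := fun t => ((rexp (-(r * t)) : ℝ) : ℂ))
    (hc.continuousOn.locallyIntegrableOn measurableSet_Ioi)
    (by
      rw [← isBigO_norm_left]
      simp_rw [Complex.norm_real, isBigO_norm_left]
      simpa only [neg_mul] using (isLittleO_exp_neg_mul_rpow_atTop hr _).isBigO)
    (by simp)
    (by
      simp_rw [neg_zero, rpow_zero]
      refine isBigO_const_of_tendsto (?_ : Tendsto _ _ (𝓝 (1 : ℂ))) one_ne_zero
      have := hc.continuousWithinAt (s := Ioi 0) (x := 0)
      simpa [ContinuousWithinAt] using this)
    (by simpa using ha)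
  obtain ⟨k1, k2⟩ := key
  have hcongr : ∀ t ∈ Ioi (0:ℝ), (t : ℂ) ^ ((a : ℂ) - 1) • (Real.log t • ((rexp (-(r * t)) : ℝ) : ℂ))
      = ((t ^ (a - 1) * rexp (-(r * t)) * Real.log t : ℝ) : ℂ) := by
    intro t ht
    have : ((t ^ (a - 1) : ℝ) : ℂ) = (t : ℂ) ^ ((a : ℂ) - 1) := by
      rw [Complex.ofReal_cpow (le_of_lt ht)]; simp
    rw [Complex.ofReal_mul, Complex.ofReal_mul, this, smul_eq_mul, Complex.real_smul]
    ring
  have i1 : IntegrableOn (fun t : ℝ => t ^ (a - 1) * rexp (-(r * t)) * Real.log t) (Ioi 0) := by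
    have := (IntegrableOn.congr_fun k1 hcongr measurableSet_Ioi).re
    exact this
  refine ⟨i1, ?_⟩
  have e1 : mellin (fun t : ℝ => Real.log t • ((rexp (-(r * t)) : ℝ) : ℂ)) a
      = ((∫ t in Ioi (0:ℝ), t ^ (a - 1) * rexp (-(r * t)) * Real.log t : ℝ) : ℂ) := by
    rw [mellin, setIntegral_congr_fun measurableSet_Ioi hcongr, integral_complex_ofReal]
  have k3 := k2.real_of_complex
  rw [e1, Complex.ofReal_re] at k3
  have e2 : (fun x : ℝ => (mellin (fun t => ((rexp (-(r * t)) : ℝ) : ℂ)) x).re)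
      =ᶠ[𝓝 a] fun x => (1 / r) ^ x * Gamma x := by
    filter_upwards [lt_mem_nhds ha] with x hx
    rw [← Real.integral_rpow_mul_exp_neg_mul_Ioi hx hr, mellin]
    rw [setIntegral_congr_fun (g := fun t : ℝ => ((t ^ (x - 1) * rexp (-(r * t)) : ℝ) : ℂ))
      measurableSet_Ioi, integral_complex_ofReal, Complex.ofReal_re]
    intro t ht
    have : ((t ^ (x - 1) : ℝ) : ℂ) = (t : ℂ) ^ ((x : ℂ) - 1) := by
      rw [Complex.ofReal_cpow (le_of_lt ht)]; simp
    simp only [smul_eq_mul]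
    rw [Complex.ofReal_mul, this]
  have k4 := k3.congr_of_eventuallyEq e2.symm
  have hG : DifferentiableAt ℝ Gamma a := Real.differentiableAt_Gamma (fun m => by
    have : (0:ℝ) ≤ m := m.cast_nonneg
    linarith)
  have hG0 := (Gamma_pos_of_pos ha).ne'
  have hd : digamma a = deriv Gamma a / Gamma a := by
    unfold digamma
    exact (hG.hasDerivAt.log hG0).deriv
  have h1r : 0 < 1 / r := by positivity
  have k5 := ((Real.hasStrictDerivAt_const_rpow h1r a).hasDerivAt).mul hG.hasDerivAt
  rw [k4.unique k5, hd, Real.log_div one_ne_zero hr.ne', Real.log_one]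
  field_simp
  ring

open Set in
lemma ng_gamma_int {a r : ℝ} {h : ℝ → ℝ}
    (hi : IntegrableOn (fun t : ℝ => t ^ (a - 1) * rexp (-(r * t)) * h t) (Ioi 0)) :
    Integrable (fun t => gammaPDFReal a r t * h t) ∧
    ∫ t, gammaPDFReal a r t * h t
      = r ^ a / Gamma a * ∫ t in Ioi (0:ℝ), t ^ (a - 1) * rexp (-(r * t)) * h t := by
  have e : (fun t => gammaPDFReal a r t * h t) =ᵐ[volume]
      (Ioi (0:ℝ)).indicator (fun t => r ^ a / Gamma a * (t ^ (a - 1) * rexp (-(r * t)) * h t)) := by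
    filter_upwards [Measure.ae_ne volume (0:ℝ)] with t ht
    rcases lt_or_gt_of_ne ht with h0 | h0
    · simp [gammaPDFReal, not_le.mpr h0, not_lt.mpr h0.le]
    · simp [gammaPDFReal, h0.le, h0]; ring
  constructor
  · rw [integrable_congr e, integrable_indicator_iff measurableSet_Ioi]
    exact hi.const_mul _
  · rw [integral_congr_ae e, integral_indicator measurableSet_Ioi, integral_const_mul]

lemma ng_gamma_one {a r : ℝ} (ha : 0 < a) (hr : 0 < r) :
    Integrable (gammaPDFReal a r) ∧ ∫ t, gammaPDFReal a r t = 1 := by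
  have hG0 := (Gamma_pos_of_pos ha).ne'
  have hv := Real.integral_rpow_mul_exp_neg_mul_Ioi ha hr
  have hi := ng_gamma_int (a := a) (r := r) (h := fun _ => 1) (by
    simp only [mul_one]
    exact .of_integral_ne_zero (by rw [hv]; positivity))
  simp only [mul_one] at hi
  refine ⟨hi.1, ?_⟩
  rw [hi.2, hv, Real.div_rpow zero_le_one hr.le, Real.one_rpow]
  have : r ^ a ≠ 0 := by positivity
  field_simp

lemma ng_gamma_id {a r : ℝ} (ha : 0 < a) (hr : 0 < r) :
    Integrable (fun t => gammaPDFReal a r t * t) ∧ ∫ t, gammaPDFReal a r t * t = a / r := by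
  have hG0 := (Gamma_pos_of_pos ha).ne'
  have ha1 : 0 < a + 1 := by linarith
  have hv := Real.integral_rpow_mul_exp_neg_mul_Ioi ha1 hr
  have hi0 : IntegrableOn (fun t : ℝ => t ^ (a + 1 - 1) * rexp (-(r * t))) (Set.Ioi 0) :=
    .of_integral_ne_zero (by
      rw [hv]
      have := Gamma_pos_of_pos ha1
      positivity)
  have hc : ∀ t ∈ Set.Ioi (0:ℝ), t ^ (a + 1 - 1) * rexp (-(r * t))
      = t ^ (a - 1) * rexp (-(r * t)) * t := by
    intro t ht
    rw [show a + 1 - 1 = (a - 1) + 1 by ring, Real.rpow_add_one (ne_of_gt ht)]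
    ring
  have hi := ng_gamma_int (a := a) (r := r) (h := fun t => t)
    (hi0.congr_fun hc measurableSet_Ioi)
  refine ⟨hi.1, ?_⟩
  rw [hi.2, ← setIntegral_congr_fun measurableSet_Ioi hc, hv, Real.div_rpow zero_le_one hr.le,
    Real.one_rpow, Real.rpow_add_one hr.ne', Real.Gamma_add_one ha.ne']
  have : r ^ a ≠ 0 := by positivity
  field_simp

lemma ng_gamma_log {a r : ℝ} (ha : 0 < a) (hr : 0 < r) :
    Integrable (fun t => gammaPDFReal a r t * Real.log t) ∧
    ∫ t, gammaPDFReal a r t * Real.log t = digamma a - Real.log r := by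
  have hG0 := (Gamma_pos_of_pos ha).ne'
  obtain ⟨h1, h2⟩ := ng_log_aux ha hr
  have hi := ng_gamma_int h1
  refine ⟨hi.1, ?_⟩
  rw [hi.2, h2, Real.div_rpow zero_le_one hr.le, Real.one_rpow]
  have : r ^ a ≠ 0 := by positivity
  field_simp

lemma ng_gauss (ξ m A B : ℝ) {v : ℝ≥0} (hv : v ≠ 0) :
    Integrable (fun x => gaussianPDFReal m v x * (A + B * (ξ - x) ^ 2)) ∧
    ∫ x, gaussianPDFReal m v x * (A + B * (ξ - x) ^ 2) = A + B * ((ξ - m) ^ 2 + v) := by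
  have i1 : Integrable (fun x : ℝ => x) (gaussianReal m v) :=
    (memLp_id_gaussianReal (μ := m) (v := v) 1).integrable (by simp)
  have m2 : MemLp (id : ℝ → ℝ) 2 (gaussianReal m v) := memLp_id_gaussianReal 2
  have i2 : Integrable (fun x : ℝ => x ^ 2) (gaussianReal m v) := m2.integrable_sq
  have v2 : ∫ x, x ^ 2 ∂(gaussianReal m v) = v + m ^ 2 := by
    have h := variance_eq_sub m2
    rw [variance_id_gaussianReal] at h
    simp only [id, Pi.pow_apply, integral_id_gaussianReal] at h
    linarith
  have e : (fun x : ℝ => A + B * (ξ - x) ^ 2)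
      = fun x => (A + B * ξ ^ 2) + ((-2 * B * ξ) * x + B * x ^ 2) := by
    ext x; ring
  have i3 : Integrable (fun x : ℝ => (-2 * B * ξ) * x + B * x ^ 2) (gaussianReal m v) :=
    (i1.const_mul _).add (i2.const_mul _)
  have i4 : Integrable (fun x : ℝ => A + B * (ξ - x) ^ 2) (gaussianReal m v) := by
    rw [e]; exact (integrable_const _).add i3
  constructor
  · rw [gaussianReal_of_var_ne_zero _ hv, integrable_withDensity_iff_integrable_smul'
      (measurable_gaussianPDF _ _) (ae_of_all _ fun _ ↦ gaussianPDF_lt_top)] at i4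
    simpa using i4
  · have h := integral_gaussianReal_eq_integral_smul (μ := m) (f := fun x : ℝ => A + B * (ξ - x) ^ 2) hv
    simp only [smul_eq_mul] at h
    rw [← h, e, integral_add (integrable_const _) i3,
      integral_add (i1.const_mul _) (i2.const_mul _), integral_const_mul, integral_const_mul,
      integral_id_gaussianReal, v2]
    simp
    ring

lemma ng_measurable_pdf (m κ α β : ℝ) : Measurable (normalGammaPDFReal m κ α β) := by
  unfold normalGammaPDFReal
  have h := measurable_gammaPDFReal α β
  have h2 := measurable_uncurry_gaussianPDFReal
  refine Measurable.mul ?_ (h.comp measurable_snd)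
  exact h2.comp (f := fun p : ℝ × ℝ => (m, (Real.toNNReal (κ * p.2)⁻¹, p.1))) (by fun_prop)

lemma ng_inner (ξ m κ α β A B l : ℝ) (hκ : 0 < κ) (hl : l ≠ 0) :
    Integrable (fun x => normalGammaPDFReal m κ α β (x, l) * (A + B * (ξ - x) ^ 2)) ∧
    ∫ x, normalGammaPDFReal m κ α β (x, l) * (A + B * (ξ - x) ^ 2)
      = gammaPDFReal α β l * (A + B * ((ξ - m) ^ 2 + (κ * l)⁻¹)) := by
  rcases lt_or_gt_of_ne hl with h0 | h0
  · simp [normalGammaPDFReal, gammaPDFReal, not_le.mpr h0]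
  · have hp : 0 < (κ * l)⁻¹ := by positivity
    have hv : Real.toNNReal (κ * l)⁻¹ ≠ 0 := by simpa using hp
    obtain ⟨h1, h2⟩ := ng_gauss ξ m A B hv
    rw [Real.coe_toNNReal _ hp.le] at h2
    have e : (fun x => normalGammaPDFReal m κ α β (x, l) * (A + B * (ξ - x) ^ 2))
      = fun x => gammaPDFReal α β l *
        (gaussianPDFReal m (Real.toNNReal (κ * l)⁻¹) x * (A + B * (ξ - x) ^ 2)) := by
      ext x; simp only [normalGammaPDFReal]; ring
    rw [e]
    exact ⟨h1.const_mul _, by rw [integral_const_mul, h2]⟩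

lemma ng_pdf_nonneg {m κ α β : ℝ} (hα : 0 < α) (hβ : 0 < β) (p : ℝ × ℝ) :
    0 ≤ normalGammaPDFReal m κ α β p :=
  mul_nonneg (gaussianPDFReal_nonneg _ _ _) (gammaPDFReal_nonneg hα hβ _)

lemma ng_core (ξ m κ α β : ℝ) (hκ : 0 < κ) (hα : 0 < α) (hβ : 0 < β) (A B : ℝ → ℝ)
    (hA : Measurable A) (hB : Measurable B)
    (hi : Integrable (fun l => gammaPDFReal α β l * (|A l| + |B l| * ((ξ - m) ^ 2 + (κ * l)⁻¹)))) :
    ∫ p : ℝ × ℝ, normalGammaPDFReal m κ α β p * (A p.2 + B p.2 * (ξ - p.1) ^ 2)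
      = ∫ l, gammaPDFReal α β l * (A l + B l * ((ξ - m) ^ 2 + (κ * l)⁻¹)) := by
  have hne := Measure.ae_ne volume (0:ℝ)
  have hm := ng_measurable_pdf m κ α β
  have hG : Integrable (fun p : ℝ × ℝ => normalGammaPDFReal m κ α β p *
      (|A p.2| + |B p.2| * (ξ - p.1) ^ 2)) (volume.prod volume) := by
    rw [integrable_prod_iff' (by
      apply Measurable.aestronglyMeasurable
      fun_prop)]
    constructor
    · filter_upwards [hne] with l hl using (ng_inner ξ m κ α β _ _ l hκ hl).1
    · refine hi.congr ?_
      filter_upwards [hne] with l hl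
      rw [← (ng_inner ξ m κ α β _ _ l hκ hl).2]
      refine integral_congr_ae (ae_of_all _ fun x => ?_)
      have := ng_pdf_nonneg (m := m) (κ := κ) hα hβ (x, l)
      exact (Real.norm_of_nonneg (by positivity)).symm
  have hF : Integrable (fun p : ℝ × ℝ => normalGammaPDFReal m κ α β p *
      (A p.2 + B p.2 * (ξ - p.1) ^ 2)) (volume.prod volume) := by
    refine hG.mono' (by
      apply Measurable.aestronglyMeasurable
      fun_prop) (ae_of_all _ fun p => ?_)
    rw [norm_mul, Real.norm_of_nonneg (ng_pdf_nonneg hα hβ p)]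
    refine mul_le_mul_of_nonneg_left ?_ (ng_pdf_nonneg hα hβ p)
    refine (norm_add_le _ _).trans ?_
    rw [norm_mul, Real.norm_eq_abs, Real.norm_eq_abs, Real.norm_of_nonneg (sq_nonneg (ξ - p.1))]
  rw [Measure.volume_eq_prod, integral_prod_symm _ hF]
  refine integral_congr_ae ?_
  filter_upwards [hne] with l hl using (ng_inner ξ m κ α β _ _ l hκ hl).2

lemma ng_log_gauss (μ x v : ℝ) (hv : 0 < v) :
    Real.log (gaussianPDFReal μ (Real.toNNReal v) x)
      = -(1/2) * Real.log (2 * π) - (1/2) * Real.log v - (x - μ) ^ 2 / (2 * v) := by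
  have h2 : 0 < 2 * π := by positivity
  rw [gaussianPDFReal, Real.coe_toNNReal _ hv.le, Real.log_mul (by positivity) (by positivity),
    Real.log_exp, Real.log_inv, Real.log_sqrt (by positivity), Real.log_mul h2.ne' hv.ne']
  ring

theorem normalGamma_expected_gaussian_log_density
    (ξ μₙ κₙ αₙ βₙ : ℝ) (hκ : 0 < κₙ) (hα : 0 < αₙ) (hβ : 0 < βₙ) :
    ∫ p, Real.log (gaussianPDFReal p.1 (Real.toNNReal p.2⁻¹) ξ)
        ∂(normalGamma μₙ κₙ αₙ βₙ)
      = Real.log (gaussianPDFReal μₙ (Real.toNNReal (βₙ / αₙ)) ξ)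
        - (1 / 2) * (1 / κₙ + Real.log αₙ - digamma αₙ) := by
  have hm := ng_measurable_pdf μₙ κₙ αₙ βₙ
  obtain ⟨a1, a2⟩ := ng_gamma_one hα hβ
  obtain ⟨b1, b2⟩ := ng_gamma_id hα hβ
  obtain ⟨c1, c2⟩ := ng_gamma_log hα hβ
  set c := (1/2) * Real.log (2 * π) with hc
  have hne := Measure.ae_ne volume (0:ℝ)
  have hcore := ng_core ξ μₙ κₙ αₙ βₙ hκ hα hβ (fun l => (1/2) * Real.log l - c)
    (fun l => -(l / 2)) (by fun_prop) (by fun_prop) (by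
      have hb : Integrable (fun l => (1/2) * |gammaPDFReal αₙ βₙ l * Real.log l|
          + (|c| + (1/2) * κₙ⁻¹) * gammaPDFReal αₙ βₙ l
          + (ξ - μₙ) ^ 2 / 2 * (gammaPDFReal αₙ βₙ l * l)) :=
        ((c1.abs.const_mul _).add (a1.const_mul _)).add (b1.const_mul _)
      refine hb.mono' (by
        have := measurable_gammaPDFReal αₙ βₙ
        apply Measurable.aestronglyMeasurable
        fun_prop) ?_
      filter_upwards [hne] with l hl
      rcases lt_or_gt_of_ne hl with h0 | h0
      · simp [gammaPDFReal, not_le.mpr h0]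
      · have hg := gammaPDFReal_nonneg hα hβ l
        rw [Real.norm_of_nonneg (by positivity), abs_mul, abs_of_nonneg hg, abs_neg,
          abs_of_pos (show 0 < l / 2 by positivity)]
        have h3 : |(1/2) * Real.log l - c| ≤ (1/2) * |Real.log l| + |c| := by
          refine (abs_sub _ _).trans ?_
          rw [abs_mul, abs_of_pos (show (0:ℝ) < 1/2 by norm_num)]
        have h4 : l / 2 * ((ξ - μₙ) ^ 2 + (κₙ * l)⁻¹) = (ξ - μₙ) ^ 2 / 2 * l + (1/2) * κₙ⁻¹ := by
          field_simp
        rw [h4]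
        have := mul_le_mul_of_nonneg_left h3 hg
        nlinarith)
  have step : ∫ p, Real.log (gaussianPDFReal p.1 (Real.toNNReal p.2⁻¹) ξ)
        ∂(normalGamma μₙ κₙ αₙ βₙ) = ∫ p : ℝ × ℝ, normalGammaPDFReal μₙ κₙ αₙ βₙ p *
          (((1/2) * Real.log p.2 - c) + -(p.2 / 2) * (ξ - p.1) ^ 2) := by
    rw [normalGamma, integral_withDensity_eq_integral_toReal_smul hm.ennreal_ofReal
      (ae_of_all _ fun _ => ENNReal.ofReal_lt_top)]
    refine integral_congr_ae ?_
    have hne2 : ∀ᵐ p : ℝ × ℝ, p.2 ≠ 0 := by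
      rw [Measure.volume_eq_prod]
      exact Measure.quasiMeasurePreserving_snd.ae hne
    filter_upwards [hne2] with p hp
    rw [ENNReal.toReal_ofReal (ng_pdf_nonneg hα hβ p), smul_eq_mul]
    rcases lt_or_gt_of_ne hp with h0 | h0
    · simp [normalGammaPDFReal, gammaPDFReal, not_le.mpr h0]
    · rw [ng_log_gauss _ _ _ (inv_pos.mpr h0), Real.log_inv, hc]
      congr 1
      field_simp
      ring
  rw [step, hcore, ng_log_gauss _ _ _ (div_pos hβ hα)]
  have e : (fun l => gammaPDFReal αₙ βₙ l * (((1/2) * Real.log l - c)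
      + -(l / 2) * ((ξ - μₙ) ^ 2 + (κₙ * l)⁻¹))) =ᵐ[volume]
      fun l => (1/2) * (gammaPDFReal αₙ βₙ l * Real.log l)
        + (-c - (1/2) * κₙ⁻¹) * gammaPDFReal αₙ βₙ l
        + -((ξ - μₙ) ^ 2 / 2) * (gammaPDFReal αₙ βₙ l * l) := by
    filter_upwards [hne] with l hl
    field_simp
    ring
  have s1 : Integrable (fun l => (1/2) * (gammaPDFReal αₙ βₙ l * Real.log l)
      + (-c - (1/2) * κₙ⁻¹) * gammaPDFReal αₙ βₙ l) := (c1.const_mul _).add (a1.const_mul _)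
  rw [integral_congr_ae e, integral_add s1 (b1.const_mul _),
    integral_add (c1.const_mul _) (a1.const_mul _), integral_const_mul, integral_const_mul,
    integral_const_mul, a2, b2, c2, Real.log_div hβ.ne' hα.ne', hc]
  field_simp
  ring
end

section
/- (Corollary: exact dual reformulation for the exponential-gamma model.) Let αₙ, βₙ > 0, let f : [0, ∞) → ℝ be bounded and measurable, and let ε > log αₙ − ψ(αₙ), where ψ is the digamma function. Then sup over probability measures Q on [0, ∞) satisfying ∫ KL(Q ‖ Exp(θ)) dGamma(αₙ, βₙ)(θ) ≤ ε of ∫ f dQ equals inf over γ > 0 of γ(ε − (log αₙ − ψ(αₙ))) + γ log ∫ exp(f(ξ)/γ) dExp(αₙ/βₙ)(ξ). -/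
open MeasureTheory ProbabilityTheory Real
open scoped ENNReal NNReal Classical

/-- Kullback-Leibler divergence: `∫ log (dQ/dP) dQ` when `Q ≪ P` and the
log-likelihood ratio is integrable, `+∞` otherwise. -/
noncomputable def klDiv {Ω : Type*} [MeasurableSpace Ω] (Q P : Measure Ω) : ℝ≥0∞ :=
  if Q ≪ P ∧ Integrable (fun x => Real.log (Q.rnDeriv P x).toReal) Q
  then ENNReal.ofReal (∫ x, Real.log (Q.rnDeriv P x).toReal ∂Q)
  else ⊤

lemma gm_eq (a r : ℝ) : gammaMeasure a r = (volume.restrict (Set.Ioi 0)).withDensity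
    (fun x => ENNReal.ofReal (r ^ a / (Real.Gamma a) * x ^ (a - 1) * Real.exp (-(r * x)))) := by
  rw [← withDensity_indicator measurableSet_Ioi, gammaMeasure]
  apply withDensity_congr_ae
  have h0 : ∀ᵐ x : ℝ ∂volume, x ≠ 0 := by
    simp [ae_iff]
  filter_upwards [h0] with x hx
  rcases lt_or_gt_of_ne hx with h | h
  · rw [gammaPDF_of_neg h, Set.indicator_of_notMem (by simpa using h.le)]
  · rw [gammaPDF_of_nonneg h.le, Set.indicator_of_mem (by simpa using h)]

lemma gm_meas (a r : ℝ) : Measurable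
    (fun x : ℝ => ENNReal.ofReal (r ^ a / (Real.Gamma a) * x ^ (a - 1) * Real.exp (-(r * x)))) := by
  fun_prop

lemma gm_ae_pos (a r : ℝ) : ∀ᵐ x ∂(gammaMeasure a r), 0 < x := by
  rw [gm_eq]
  exact (withDensity_absolutelyContinuous _ _).ae_le (ae_restrict_mem measurableSet_Ioi)

lemma gm_integrable_iff {a r : ℝ} (ha : 0 < a) (hr : 0 < r) (g : ℝ → ℝ) :
    Integrable g (gammaMeasure a r) ↔ IntegrableOn
      (fun x => r ^ a / (Real.Gamma a) * x ^ (a - 1) * Real.exp (-(r * x)) * g x) (Set.Ioi 0) := by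
  rw [gm_eq, integrable_withDensity_iff_integrable_smul' (gm_meas a r) (by simp)]
  apply integrable_congr
  filter_upwards [ae_restrict_mem measurableSet_Ioi] with x hx
  have hx : 0 < x := hx
  have := Real.Gamma_pos_of_pos ha
  rw [ENNReal.toReal_ofReal (by positivity), smul_eq_mul]

lemma gm_integral {a r : ℝ} (ha : 0 < a) (hr : 0 < r) (g : ℝ → ℝ) :
    ∫ x, g x ∂(gammaMeasure a r) = ∫ x in Set.Ioi 0,
      (r ^ a / (Real.Gamma a) * x ^ (a - 1) * Real.exp (-(r * x)) * g x) := by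
  rw [gm_eq, integral_withDensity_eq_integral_toReal_smul (gm_meas a r) (by simp)]
  apply integral_congr_ae
  filter_upwards [ae_restrict_mem measurableSet_Ioi] with x hx
  have hx : 0 < x := hx
  have := Real.Gamma_pos_of_pos ha
  rw [ENNReal.toReal_ofReal (by positivity), smul_eq_mul]

lemma gm_rpow {a r t : ℝ} (ha : 0 < a) (hr : 0 < r) (ht : 0 < a + t) :
    ∫ x, x ^ t ∂(gammaMeasure a r) = Real.Gamma (a + t) / (Real.Gamma a * r ^ t) := by
  have h1 := Real.integral_rpow_mul_exp_neg_mul_Ioi ht hr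
  have hG := Real.Gamma_pos_of_pos ha
  rw [gm_integral ha hr]
  have : ∫ x in Set.Ioi 0, (r ^ a / (Real.Gamma a) * x ^ (a - 1) * Real.exp (-(r * x)) * x ^ t)
      = ∫ x in Set.Ioi 0, (r ^ a / (Real.Gamma a)) * (x ^ (a + t - 1) * Real.exp (-(r * x))) := by
    apply setIntegral_congr_fun measurableSet_Ioi
    intro x hx
    have hx : 0 < x := hx
    have : a + t - 1 = (a - 1) + t := by ring
    simp only [this, Real.rpow_add hx]
    ring
  rw [this, integral_const_mul, h1, one_div, Real.inv_rpow hr.le, Real.rpow_add hr]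
  have := Real.rpow_pos_of_pos hr a
  have := Real.rpow_pos_of_pos hr t
  field_simp

lemma gm_rpow_int {a r t : ℝ} (ha : 0 < a) (hr : 0 < r) (ht : 0 < a + t) :
    Integrable (fun x => x ^ t) (gammaMeasure a r) := by
  by_contra h
  have h1 := gm_rpow ha hr ht
  rw [integral_undef h] at h1
  have hG := Real.Gamma_pos_of_pos ha
  have hG' := Real.Gamma_pos_of_pos ht
  have : 0 < Real.Gamma (a + t) / (Real.Gamma a * r ^ t) := by positivity
  linarith

lemma gm_id_int {a r : ℝ} (ha : 0 < a) (hr : 0 < r) :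
    Integrable (fun x => x) (gammaMeasure a r) := by
  simpa using gm_rpow_int (t := 1) ha hr (by linarith)

lemma gm_id {a r : ℝ} (ha : 0 < a) (hr : 0 < r) :
    ∫ x, x ∂(gammaMeasure a r) = a / r := by
  have h := gm_rpow (t := 1) ha hr (by linarith)
  have hG := Real.Gamma_pos_of_pos ha
  simp only [Real.rpow_one] at h
  rw [h, Real.Gamma_add_one ha.ne']
  field_simp

lemma gm_exp_log {a r : ℝ} (t : ℝ) :
    (fun x => Real.exp (t * Real.log x)) =ᵐ[gammaMeasure a r] fun x => x ^ t := by
  filter_upwards [gm_ae_pos a r] with x hx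
  rw [Real.rpow_def_of_pos hx, mul_comm]

lemma gm_mem {a r : ℝ} (ha : 0 < a) (hr : 0 < r) :
    (0 : ℝ) ∈ interior (integrableExpSet Real.log (gammaMeasure a r)) := by
  rw [mem_interior]
  refine ⟨Set.Ioi (-a), fun t ht => ?_, isOpen_Ioi, by simpa using ha⟩
  have ht : -a < t := ht
  exact (integrable_congr (gm_exp_log t)).2 (gm_rpow_int ha hr (by linarith))

lemma gm_log_int {a r : ℝ} (ha : 0 < a) (hr : 0 < r) :
    Integrable Real.log (gammaMeasure a r) := by
  have := integrable_pow_of_mem_interior_integrableExpSet (gm_mem ha hr) 1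
  simpa using this

lemma gm_log {a r : ℝ} (ha : 0 < a) (hr : 0 < r) :
    ∫ x, Real.log x ∂(gammaMeasure a r) = digamma a - Real.log r := by
  have := isProbabilityMeasure_gammaMeasure ha hr
  have h := deriv_cgf_zero (gm_mem ha hr)
  simp only [probReal_univ, div_one] at h
  rw [← h]
  have hev : cgf Real.log (gammaMeasure a r) =ᶠ[nhds 0] fun t =>
      Real.log (Real.Gamma (a + t)) - Real.log (Real.Gamma a) - t * Real.log r := by
    filter_upwards [Ioi_mem_nhds (show -a < 0 by linarith)] with t ht
    have ht : -a < t := ht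
    have ht' : 0 < a + t := by linarith
    rw [cgf, mgf, integral_congr_ae (gm_exp_log t), gm_rpow ha hr ht']
    have hG := Real.Gamma_pos_of_pos ha
    have hG' := Real.Gamma_pos_of_pos ht'
    rw [Real.log_div hG'.ne' (by positivity), Real.log_mul hG.ne' (by positivity),
      Real.log_rpow hr]
    ring
  rw [hev.deriv_eq]
  have hd : DifferentiableAt ℝ (fun y => Real.log (Real.Gamma y)) a :=
    (Real.differentiableAt_Gamma (fun m => by
      have : (0:ℝ) ≤ m := m.cast_nonneg
      linarith)).log (Real.Gamma_pos_of_pos ha).ne'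
  have h1 : HasDerivAt (fun y => Real.log (Real.Gamma y)) (digamma a) (a + 0) := by
    simpa [digamma] using hd.hasDerivAt
  have h2 := h1.comp_const_add a 0
  have h3 := (h2.sub_const (Real.log (Real.Gamma a))).sub
    ((hasDerivAt_id (0 : ℝ)).mul_const (Real.log r))
  have h4 : HasDerivAt (fun t => Real.log (Real.Gamma (a + t)) - Real.log (Real.Gamma a)
      - t * Real.log r) (digamma a - 1 * Real.log r) 0 := h3
  simpa using h4.deriv

lemma ex_ae_eq (θ s : ℝ) : ∫ x in Set.Ioi (0:ℝ),
      (θ ^ (1:ℝ) / (Real.Gamma 1) * x ^ ((1:ℝ) - 1) * Real.exp (-(θ * x)) * Real.exp (s * x))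
      = θ * ∫ x in Set.Ioi (0:ℝ), x ^ ((1:ℝ) - 1) * Real.exp (-((θ - s) * x)) := by
  rw [← integral_const_mul]
  congr 1
  ext x
  have : -((θ - s) * x) = -(θ * x) + s * x := by ring
  rw [this, Real.exp_add]
  simp
  ring

lemma ex_mgf {θ s : ℝ} (hθ : 0 < θ) (hs : s < θ) :
    ∫ x, Real.exp (s * x) ∂(expMeasure θ) = θ / (θ - s) := by
  rw [expMeasure, gm_integral one_pos hθ, ex_ae_eq,
    Real.integral_rpow_mul_exp_neg_mul_Ioi one_pos (by linarith)]
  simp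
  rfl

lemma ex_mgf_int {θ s : ℝ} (hθ : 0 < θ) (hs : s < θ) :
    Integrable (fun x => Real.exp (s * x)) (expMeasure θ) := by
  by_contra h
  have h1 := ex_mgf hθ hs
  rw [integral_undef h] at h1
  have : 0 < θ / (θ - s) := div_pos hθ (by linarith)
  linarith

lemma ex_tilted {θ θ' : ℝ} (hθ : 0 < θ) (hθ' : 0 < θ') :
    expMeasure θ' = (expMeasure θ).tilted (fun x => (θ - θ') * x) := by
  rw [Measure.tilted, ex_mgf hθ (by linarith), expMeasure, expMeasure, gm_eq, gm_eq,
    ← withDensity_mul _ (gm_meas 1 θ) (by fun_prop)]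
  congr 1
  ext x
  simp only [Pi.mul_apply]
  rw [← ENNReal.ofReal_mul' (by
    have : θ - (θ - θ') = θ' := by ring
    rw [this]; positivity)]
  congr 1
  have : -(θ' * x) = -(θ * x) + (θ - θ') * x := by ring
  rw [this, Real.exp_add]
  simp
  field_simp

lemma kl_id_int {Q : Measure ℝ} [IsProbabilityMeasure Q] {θ : ℝ} (hθ : 0 < θ)
    (hac : Q ≪ expMeasure θ) (hi : Integrable (llr Q (expMeasure θ)) Q) :
    Integrable (fun x : ℝ => x) Q := by
  have := isProbabilityMeasure_expMeasure hθ
  set P := expMeasure θ with hP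
  have h1 : Integrable (fun x => Real.exp (θ / 2 * x) * ((Q.rnDeriv P x).toReal)⁻¹) Q := by
    rw [← integrable_rnDeriv_smul_iff hac]
    refine (ex_mgf_int hθ (by linarith : θ / 2 < θ)).mono' ?_ ?_
    · have := Q.measurable_rnDeriv P
      apply Measurable.aestronglyMeasurable
      simp only [smul_eq_mul]
      fun_prop
    · refine Filter.Eventually.of_forall fun x => ?_
      have h0 : 0 ≤ (Q.rnDeriv P x).toReal := ENNReal.toReal_nonneg
      have h1 : 0 < Real.exp (θ / 2 * x) := Real.exp_pos _
      rw [smul_eq_mul, Real.norm_of_nonneg (by positivity)]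
      rcases h0.eq_or_lt with h | h
      · rw [← h]; simp [h1.le]
      · field_simp; exact le_refl _
  refine ((hi.norm.add h1).const_mul (2 / θ)).mono' measurable_id.aestronglyMeasurable ?_
  filter_upwards [hac.ae_le (gm_ae_pos 1 θ), Measure.rnDeriv_pos hac,
    hac.ae_le (Measure.rnDeriv_lt_top Q P)] with x hx hp0 hp1
  have hp := ENNReal.toReal_pos hp0.ne' hp1.ne
  rw [Real.norm_of_nonneg hx.le]
  have h2 := Real.add_one_le_exp (θ / 2 * x - Real.log (Q.rnDeriv P x).toReal)
  rw [Real.exp_sub, Real.exp_log hp] at h2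
  have h3 : Real.log (Q.rnDeriv P x).toReal ≤ ‖llr Q P x‖ := le_abs_self _
  have h4 : θ / 2 * x ≤ ‖llr Q P x‖ + Real.exp (θ / 2 * x) * ((Q.rnDeriv P x).toReal)⁻¹ := by
    rw [← div_eq_mul_inv]; linarith
  calc x = 2 / θ * (θ / 2 * x) := by field_simp
    _ ≤ _ := by
      apply mul_le_mul_of_nonneg_left _ (by positivity)
      exact h4

lemma kl_change {Q : Measure ℝ} [IsProbabilityMeasure Q] {θ θ' : ℝ} (hθ : 0 < θ) (hθ' : 0 < θ')
    (hac : Q ≪ expMeasure θ) (hi : Integrable (llr Q (expMeasure θ)) Q) :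
    Q ≪ expMeasure θ' ∧ Integrable (llr Q (expMeasure θ')) Q ∧
    ∫ x, llr Q (expMeasure θ') x ∂Q = ∫ x, llr Q (expMeasure θ) x ∂Q
      + (θ' - θ) * ∫ x, x ∂Q + (Real.log θ - Real.log θ') := by
  have := isProbabilityMeasure_expMeasure hθ
  have hid := kl_id_int hθ hac hi
  have he : Integrable (fun x => Real.exp ((θ - θ') * x)) (expMeasure θ) :=
    ex_mgf_int hθ (by linarith)
  rw [ex_tilted hθ hθ']
  refine ⟨hac.trans (absolutelyContinuous_tilted he),
    integrable_llr_tilted_right hac (hid.const_mul _) hi he, ?_⟩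
  rw [integral_llr_tilted_right hac (hid.const_mul _) he hi, ex_mgf hθ (by linarith),
    integral_const_mul, sub_sub_cancel, Real.log_div hθ.ne' hθ'.ne']
  ring

lemma kl_nonneg {Q P : Measure ℝ} [IsProbabilityMeasure Q] [IsProbabilityMeasure P]
    (hac : Q ≪ P) (hi : Integrable (llr Q P) Q) : 0 ≤ ∫ x, llr Q P x ∂Q := by
  have := InformationTheory.integral_llr_add_sub_measure_univ_nonneg hac hi
  simpa using this

lemma klDiv_eq {Q P : Measure ℝ} (hac : Q ≪ P) (hi : Integrable (llr Q P) Q) :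
    klDiv Q P = ENNReal.ofReal (∫ x, llr Q P x ∂Q) := if_pos ⟨hac, hi⟩

lemma kl_avg {Q : Measure ℝ} [IsProbabilityMeasure Q] {a b : ℝ} (ha : 0 < a) (hb : 0 < b)
    (hac : Q ≪ expMeasure (a / b)) (hi : Integrable (llr Q (expMeasure (a / b))) Q) :
    0 ≤ ∫ x, llr Q (expMeasure (a / b)) x ∂Q + (Real.log a - digamma a) ∧
    ∫⁻ θ, klDiv Q (expMeasure θ) ∂(gammaMeasure a b) =
      ENNReal.ofReal (∫ x, llr Q (expMeasure (a / b)) x ∂Q + (Real.log a - digamma a)) := by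
  have hab : 0 < a / b := by positivity
  have hG := isProbabilityMeasure_gammaMeasure ha hb
  set K := ∫ x, llr Q (expMeasure (a / b)) x ∂Q with hK
  set m := ∫ x, x ∂Q
  let F : ℝ → ℝ := fun θ => K + (θ - a / b) * m + (Real.log (a / b) - Real.log θ)
  have hF1 : Integrable (fun θ => (θ - a / b) * m) (gammaMeasure a b) :=
    ((gm_id_int ha hb).sub (integrable_const _)).mul_const _
  have hF2 : Integrable (fun θ => Real.log (a / b) - Real.log θ) (gammaMeasure a b) :=
    (integrable_const _).sub (gm_log_int ha hb)
  have hF3 : Integrable (fun θ => K + (θ - a / b) * m) (gammaMeasure a b) :=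
    (integrable_const _).add hF1
  have hF : Integrable F (gammaMeasure a b) := hF3.add hF2
  have hFi : ∫ θ, F θ ∂(gammaMeasure a b) = K + (Real.log a - digamma a) := by
    simp only [F]
    rw [integral_add hF3 hF2, integral_add (integrable_const _) hF1, integral_mul_const,
      integral_sub (gm_id_int ha hb) (integrable_const _),
      integral_sub (integrable_const _) (gm_log_int ha hb), gm_id ha hb, gm_log ha hb,
      Real.log_div ha.ne' hb.ne']
    simp
  have hF0 : ∀ᵐ θ ∂(gammaMeasure a b), 0 ≤ F θ ∧ klDiv Q (expMeasure θ) = ENNReal.ofReal (F θ) := by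
    filter_upwards [gm_ae_pos a b] with θ hθ
    obtain ⟨h1, h2, h3⟩ := kl_change hab hθ hac hi
    have := isProbabilityMeasure_expMeasure hθ
    have h4 := kl_nonneg h1 h2
    rw [klDiv_eq h1 h2]
    rw [h3] at h4 ⊢
    exact ⟨h4, rfl⟩
  have hnn : 0 ≤ᵐ[gammaMeasure a b] F := hF0.mono fun _ h => h.1
  rw [← hFi]
  refine ⟨integral_nonneg_of_ae hnn, ?_⟩
  rw [ofReal_integral_eq_lintegral_ofReal hF hnn]
  exact lintegral_congr_ae (hF0.mono fun _ h => h.2)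

lemma c_nonneg {a : ℝ} (ha : 0 < a) : 0 ≤ Real.log a - digamma a := by
  have hp := isProbabilityMeasure_expMeasure (show 0 < a / 1 by positivity)
  have h0 := llr_self (expMeasure (a / 1))
  have h := (kl_avg (Q := expMeasure (a / 1)) ha one_pos Measure.AbsolutelyContinuous.rfl
    ((integrable_congr h0).2 (integrable_zero _ _ _))).1
  rw [integral_congr_ae h0] at h
  simpa using h

lemma feas_iff {Q : Measure ℝ} [IsProbabilityMeasure Q] {a b ε : ℝ} (ha : 0 < a) (hb : 0 < b)
    (hε : Real.log a - digamma a < ε) :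
    ∫⁻ θ, klDiv Q (expMeasure θ) ∂(gammaMeasure a b) ≤ ENNReal.ofReal ε ↔
      Q ≪ expMeasure (a / b) ∧ Integrable (llr Q (expMeasure (a / b))) Q ∧
      ∫ x, llr Q (expMeasure (a / b)) x ∂Q ≤ ε - (Real.log a - digamma a) := by
  have hε0 : 0 ≤ ε := (c_nonneg ha).trans hε.le
  have hG := isProbabilityMeasure_gammaMeasure ha hb
  constructor
  · intro h
    have hex : ∃ θ, 0 < θ ∧ klDiv Q (expMeasure θ) ≠ ⊤ := by
      by_contra hcon
      push Not at hcon
      have : ∫⁻ θ, klDiv Q (expMeasure θ) ∂(gammaMeasure a b) = ⊤ := by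
        rw [lintegral_congr_ae (g := fun _ => ⊤)
          ((gm_ae_pos a b).mono fun θ hθ => hcon θ hθ)]
        simp
      rw [this] at h
      simp at h
    obtain ⟨θ, hθ, hk⟩ := hex
    have hc : Q ≪ expMeasure θ ∧ Integrable (llr Q (expMeasure θ)) Q := by
      by_contra hcon
      exact hk (if_neg hcon)
    obtain ⟨h1, h2, -⟩ := kl_change hθ (show 0 < a / b by positivity) hc.1 hc.2
    refine ⟨h1, h2, ?_⟩
    rw [(kl_avg ha hb h1 h2).2, ENNReal.ofReal_le_ofReal_iff hε0] at h
    linarith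
  · rintro ⟨h1, h2, h3⟩
    rw [(kl_avg ha hb h1 h2).2]
    exact ENNReal.ofReal_le_ofReal (by linarith)

lemma exp_int {P : Measure ℝ} [IsProbabilityMeasure P] {f : ℝ → ℝ} (hf : Measurable f) {C : ℝ}
    (hC : ∀ x, |f x| ≤ C) (t : ℝ) : Integrable (fun x => Real.exp (t * f x)) P := by
  refine Integrable.of_bound (by fun_prop) (Real.exp (|t| * C)) (Filter.Eventually.of_forall
    fun x => ?_)
  rw [Real.norm_of_nonneg (Real.exp_pos _).le, Real.exp_le_exp]
  calc t * f x ≤ |t * f x| := le_abs_self _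
    _ = |t| * |f x| := abs_mul _ _
    _ ≤ _ := mul_le_mul_of_nonneg_left (hC x) (abs_nonneg _)

lemma f_int {P : Measure ℝ} [IsProbabilityMeasure P] {f : ℝ → ℝ} (hf : Measurable f) {C : ℝ}
    (hC : ∀ x, |f x| ≤ C) : Integrable f P :=
  Integrable.of_bound hf.aestronglyMeasurable C (Filter.Eventually.of_forall hC)

lemma weak {P Q : Measure ℝ} [IsProbabilityMeasure P] [IsProbabilityMeasure Q] {f : ℝ → ℝ}
    (hf : Measurable f) {C : ℝ} (hC : ∀ x, |f x| ≤ C) (t : ℝ)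
    (hac : Q ≪ P) (hi : Integrable (llr Q P) Q) :
    t * ∫ x, f x ∂Q ≤ ∫ x, llr Q P x ∂Q + cgf f P t := by
  have he := exp_int (P := P) hf hC t
  have hfi : Integrable (fun x => t * f x) Q := (f_int hf hC).const_mul t
  have := isProbabilityMeasure_tilted he
  have h := kl_nonneg (hac.trans (absolutelyContinuous_tilted he))
    (integrable_llr_tilted_right hac hfi hi he)
  rw [integral_llr_tilted_right hac hfi he hi, integral_const_mul] at h
  rw [cgf, mgf]
  linarith

lemma tilt {P : Measure ℝ} [IsProbabilityMeasure P] {f : ℝ → ℝ}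
    (hf : Measurable f) {C : ℝ} (hC : ∀ x, |f x| ≤ C) (t : ℝ) :
    IsProbabilityMeasure (P.tilted (t * f ·)) ∧ P.tilted (t * f ·) ≪ P ∧
    Integrable (llr (P.tilted (t * f ·)) P) (P.tilted (t * f ·)) ∧
    ∫ x, llr (P.tilted (t * f ·)) P x ∂(P.tilted (t * f ·)) = t * deriv (cgf f P) t - cgf f P t ∧
    ∫ x, f x ∂(P.tilted (t * f ·)) = deriv (cgf f P) t ∧
    0 ≤ t * deriv (cgf f P) t - cgf f P t := by
  have he := exp_int (P := P) hf hC t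
  have hp := isProbabilityMeasure_tilted he
  have hac := tilted_absolutelyContinuous P (t * f ·)
  have hm : integrableExpSet f P = Set.univ := by
    ext s; simpa using! exp_int (P := P) hf hC s
  have hd : ∫ x, f x ∂(P.tilted (t * f ·)) = deriv (cgf f P) t :=
    integral_tilted_mul_self (by simp [hm])
  have hl : llr (P.tilted (t * f ·)) P =ᵐ[P.tilted (t * f ·)] fun x => t * f x - cgf f P t :=
    hac.ae_le (log_rnDeriv_tilted_left_self he)
  have hfi : Integrable (fun x => t * f x) (P.tilted (t * f ·)) := (f_int hf hC).const_mul t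
  have hli : Integrable (llr (P.tilted (t * f ·)) P) (P.tilted (t * f ·)) :=
    (integrable_congr hl).2 (hfi.sub (integrable_const _))
  have hv : ∫ x, llr (P.tilted (t * f ·)) P x ∂(P.tilted (t * f ·))
      = t * deriv (cgf f P) t - cgf f P t := by
    rw [integral_congr_ae hl, integral_sub hfi (integrable_const _), integral_const_mul, hd]
    simp
  exact ⟨hp, hac, hli, hv, hd, hv ▸ kl_nonneg hac hli⟩

lemma h_cont {P : Measure ℝ} [IsProbabilityMeasure P] {f : ℝ → ℝ}
    (hf : Measurable f) {C : ℝ} (hC : ∀ x, |f x| ≤ C) :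
    Continuous fun t => t * deriv (cgf f P) t - cgf f P t := by
  have hm : interior (integrableExpSet f P) = Set.univ := by
    have : integrableExpSet f P = Set.univ := by
      ext s; simpa using! exp_int (P := P) hf hC s
    simp [this]
  have h1 : AnalyticOnNhd ℝ (cgf f P) Set.univ := hm ▸ analyticOnNhd_cgf
  have h2 := h1.deriv
  exact (continuous_id.mul (continuousOn_univ.1 h2.continuousOn)).sub
    (continuousOn_univ.1 h1.continuousOn)

/-- approximate strong duality -/
lemma strong {P : Measure ℝ} [IsProbabilityMeasure P] {f : ℝ → ℝ}
    (hf : Measurable f) {C : ℝ} (hC : ∀ x, |f x| ≤ C) {δ η : ℝ} (hδ : 0 < δ) (hη : 0 < η) :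
    ∃ t : ℝ, 0 < t ∧ t * deriv (cgf f P) t - cgf f P t ≤ δ ∧
      δ / t + cgf f P t / t ≤ deriv (cgf f P) t + η := by
  by_cases hex : ∃ t : ℝ, 0 < t ∧ t * deriv (cgf f P) t - cgf f P t = δ
  · obtain ⟨t, ht, h⟩ := hex
    refine ⟨t, ht, h.le, ?_⟩
    have : δ / t + cgf f P t / t = deriv (cgf f P) t := by
      rw [← h]; field_simp; ring
    linarith
  · have hlt : ∀ t : ℝ, 0 < t → t * deriv (cgf f P) t - cgf f P t < δ := by
      intro t ht
      by_contra hcon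
      push Not at hcon
      have := intermediate_value_Icc ht.le (h_cont (P := P) hf hC).continuousOn
      obtain ⟨s, hs, hs'⟩ := this (show δ ∈ Set.Icc _ _ from ⟨by simpa using hδ.le, hcon⟩)
      refine hex ⟨s, ?_, hs'⟩
      rcases hs.1.eq_or_lt with h | h
      · rw [← h] at hs'
        simp at hs'
        exact absurd hs' hδ.ne
      · exact h
    refine ⟨δ / η, by positivity, (hlt _ (by positivity)).le, ?_⟩
    have h0 := (tilt (P := P) hf hC (δ / η)).2.2.2.2.2
    have hp : 0 < δ / η := by positivity
    set t := δ / η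
    have : δ / t = η := by simp only [t]; field_simp
    rw [this]
    have : cgf f P t / t ≤ deriv (cgf f P) t := by
      rw [div_le_iff₀ hp]; linarith
    linarith

theorem dro_bas_dual_exponential_gamma
    (αₙ βₙ : ℝ) (hα : 0 < αₙ) (hβ : 0 < βₙ)
    (f : ℝ → ℝ) (hf_meas : Measurable f) (hf_bdd : ∃ C : ℝ, ∀ x, |f x| ≤ C)
    (ε : ℝ) (hε : Real.log αₙ - digamma αₙ < ε) :
    sSup {r : ℝ | ∃ Q : Measure ℝ, IsProbabilityMeasure Q ∧ Q (Set.Iio 0) = 0 ∧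
        (∫⁻ θ, klDiv Q (expMeasure θ) ∂(gammaMeasure αₙ βₙ)) ≤ ENNReal.ofReal ε ∧
        r = ∫ ξ, f ξ ∂Q}
      = sInf {r : ℝ | ∃ γ : ℝ, 0 < γ ∧
          r = γ * (ε - (Real.log αₙ - digamma αₙ))
            + γ * Real.log (∫ ξ, Real.exp (f ξ / γ) ∂(expMeasure (αₙ / βₙ)))} := by
  obtain ⟨C, hC⟩ := hf_bdd
  have hab : 0 < αₙ / βₙ := by positivity
  have hP := isProbabilityMeasure_expMeasure hab
  set P := expMeasure (αₙ / βₙ) with hPdef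
  set δ := ε - (Real.log αₙ - digamma αₙ) with hδdef
  have hδ : 0 < δ := by simp only [hδdef]; linarith
  have hobj : ∀ γ : ℝ, Real.log (∫ ξ, Real.exp (f ξ / γ) ∂P) = cgf f P γ⁻¹ := by
    intro γ
    rw [cgf, mgf]
    simp only [div_eq_inv_mul]
  have hw : ∀ r ∈ {r : ℝ | ∃ Q : Measure ℝ, IsProbabilityMeasure Q ∧ Q (Set.Iio 0) = 0 ∧
        (∫⁻ θ, klDiv Q (expMeasure θ) ∂(gammaMeasure αₙ βₙ)) ≤ ENNReal.ofReal ε ∧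
        r = ∫ ξ, f ξ ∂Q}, ∀ s ∈ {r : ℝ | ∃ γ : ℝ, 0 < γ ∧
          r = γ * δ + γ * Real.log (∫ ξ, Real.exp (f ξ / γ) ∂P)}, r ≤ s := by
    rintro r ⟨Q, hQ, -, hk, rfl⟩ s ⟨γ, hγ, rfl⟩
    obtain ⟨h1, h2, h3⟩ := (feas_iff hα hβ hε).1 hk
    have h4 := weak hf_meas hC γ⁻¹ h1 h2
    rw [hobj, ← mul_add]
    calc ∫ ξ, f ξ ∂Q = γ * (γ⁻¹ * ∫ ξ, f ξ ∂Q) := by field_simp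
      _ ≤ _ := mul_le_mul_of_nonneg_left (by linarith) hγ.le
  have hfe : ∀ t : ℝ, t * deriv (cgf f P) t - cgf f P t ≤ δ →
      deriv (cgf f P) t ∈ {r : ℝ | ∃ Q : Measure ℝ, IsProbabilityMeasure Q ∧ Q (Set.Iio 0) = 0 ∧
        (∫⁻ θ, klDiv Q (expMeasure θ) ∂(gammaMeasure αₙ βₙ)) ≤ ENNReal.ofReal ε ∧
        r = ∫ ξ, f ξ ∂Q} := by
    intro t ht
    obtain ⟨h1, h2, h3, h4, h5, -⟩ := tilt (P := P) hf_meas hC t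
    refine ⟨P.tilted (t * f ·), h1, h2 ?_, (feas_iff hα hβ hε).2 ⟨h2, h3, h4.le.trans ht⟩, h5.symm⟩
    have h6 := gm_ae_pos 1 (αₙ / βₙ)
    rw [ae_iff] at h6
    refine measure_mono_null (fun x hx => ?_) h6
    have hx : x < 0 := hx
    simpa using hx.le
  have hne2 : {r : ℝ | ∃ γ : ℝ, 0 < γ ∧
          r = γ * δ + γ * Real.log (∫ ξ, Real.exp (f ξ / γ) ∂P)}.Nonempty := ⟨_, 1, one_pos, rfl⟩
  have hne1 : {r : ℝ | ∃ Q : Measure ℝ, IsProbabilityMeasure Q ∧ Q (Set.Iio 0) = 0 ∧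
        (∫⁻ θ, klDiv Q (expMeasure θ) ∂(gammaMeasure αₙ βₙ)) ≤ ENNReal.ofReal ε ∧
        r = ∫ ξ, f ξ ∂Q}.Nonempty := ⟨_, hfe 0 (by simpa using hδ.le)⟩
  apply le_antisymm
  · exact csSup_le hne1 fun r hr => le_csInf hne2 fun s hs => hw r hr s hs
  · apply le_of_forall_pos_le_add
    intro η hη
    obtain ⟨t, ht, h1, h2⟩ := strong (P := P) hf_meas hC hδ hη
    obtain ⟨s₀, hs₀⟩ := hne2
    obtain ⟨r₀, hr₀⟩ := hne1
    have h3 := le_csSup ⟨s₀, fun r hr => hw r hr s₀ hs₀⟩ (hfe t h1)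
    have h4 := csInf_le (a := δ / t + cgf f P t / t) ⟨r₀, fun s hs => hw r₀ hr₀ s hs⟩
      ⟨t⁻¹, inv_pos.2 ht, by rw [hobj, inv_inv]; ring⟩
    linarith
end
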